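/- Let n ≥ 4, let L be a Cartan type Lie superalgebra over ℂ (one of W(n), S(n), S̃(n) for n even, or H(n) for n > 4) with top ℤ-degree ξ_L (ξ_W = n−1, ξ_S = ξ_{S̃} = n−2, ξ_H = n−3), let f ∈ BDer(L) be a homogeneous super-biderivation, and let φ_f, ψ_f : L → L' be linear maps with f(x,y) = [φ_f(x), y] = [x, ψ_f(y)] for all x, y ∈ L. If φ_f vanishes on L_{−1} ⊕ L_{ξ_L} or ψ_f vanishes on L_{−1} ⊕ L_{ξ_L}, then f is the zero map. -/

import Mathlib

open scoped BigOperators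

noncomputable section

namespace CartanSuper

/-- Coordinates of the exterior algebra `Λ(n)` with respect to the monomial basis
`{x_S : S ⊆ {1,…,n}}`. -/
abbrev Lambda (n : ℕ) := Finset (Fin n) → ℂ

/-- Endomorphism algebra of `Λ(n)`. -/
abbrev E (n : ℕ) := Module.End ℂ (Lambda n)

variable (n : ℕ)

/-- `(−1)^k`. -/
def msign (k : ℕ) : ℂ := (-1 : ℂ) ^ k

/-- The basis monomial `x_S = x_{i₁}⋯x_{i_k}` (indices in increasing order). -/
def mono (S : Finset (Fin n)) : Lambda n := fun T => if T = S then 1 else 0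

/-- Number of inversions between `S` and `T`. -/
def inversions (S T : Finset (Fin n)) : ℕ := ((S ×ˢ T).filter fun p => p.2 < p.1).card

/-- The multiplication of `Λ(n)` in coordinates:
`x_S · x_T = (−1)^{inversions} x_{S ∪ T}` for disjoint `S, T` and `0` otherwise. -/
def lmulFun (f g : Lambda n) : Lambda n :=
  fun U => ∑ S ∈ U.powerset, msign (inversions n S (U \ S)) * f S * g (U \ S)

/-- Left multiplication by an element of `Λ(n)`, as a linear map `Λ(n) →ₗ End Λ(n)`. -/
def mulOp : Lambda n →ₗ[ℂ] E n where
  toFun f :=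
    { toFun := lmulFun n f
      map_add' := by
        intro g h; funext U
        simp [lmulFun, mul_add, Finset.sum_add_distrib]
      map_smul' := by
        intro c g; funext U
        simp only [lmulFun, Pi.smul_apply, smul_eq_mul, RingHom.id_apply, Finset.mul_sum]
        exact Finset.sum_congr rfl (by intros; ring) }
  map_add' := by
    intro f g; apply LinearMap.ext; intro h; funext U
    show lmulFun n (f + g) h U = lmulFun n f h U + lmulFun n g h U
    simp only [lmulFun]
    rw [← Finset.sum_add_distrib]
    exact Finset.sum_congr rfl (by intros; simp [Pi.add_apply]; ring)
  map_smul' := by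
    intro c f; apply LinearMap.ext; intro h; funext U
    show lmulFun n (c • f) h U = (c • lmulFun n f h) U
    simp only [lmulFun, Pi.smul_apply, smul_eq_mul, Finset.mul_sum]
    exact Finset.sum_congr rfl (by intros; ring)

/-- The superderivation `∂_i` of `Λ(n)`, in coordinates. -/
def pd (i : Fin n) : E n where
  toFun f := fun S =>
    if i ∈ S then 0 else msign (S.filter (· < i)).card * f (insert i S)
  map_add' := by
    intro f g; funext S; by_cases h : i ∈ S <;> simp [h, mul_add]
  map_smul' := by
    intro c f; funext S; by_cases h : i ∈ S <;> simp [h] <;> ring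

/-- The parity operator `σ` of `Λ(n)`: `σ(x_S) = (−1)^{|S|} x_S`. -/
def par : E n where
  toFun f := fun S => msign S.card * f S
  map_add' := by intro f g; funext S; simp [mul_add]
  map_smul' := by intro c f; funext S; simp; ring

/-- The super-commutator `[D,F] = D∘F − (−1)^{|D||F|} F∘D`, extended bilinearly to all of
`End Λ(n)` using the parity operator `σ`
(for homogeneous `D`, `σ∘D∘σ = (−1)^{|D|} D`). -/
def sbFun (D F : E n) : E n :=
  D * F - (2:ℂ)⁻¹ • ((F + par n * F * par n) * D + (F - par n * F * par n) * (par n * D * par n))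

/-- The super-commutator as a bilinear map. -/
def sbL : E n →ₗ[ℂ] E n →ₗ[ℂ] E n :=
  LinearMap.mk₂ ℂ (sbFun n)
    (fun D D' F => by
      simp only [sbFun, add_mul, sub_mul, mul_add, mul_sub, smul_mul_assoc, mul_smul_comm,
        smul_add, smul_sub]
      module)
    (fun c D F => by
      simp only [sbFun, add_mul, sub_mul, mul_add, mul_sub, smul_mul_assoc, mul_smul_comm,
        smul_add, smul_sub]
      module)
    (fun D F F' => by
      simp only [sbFun, add_mul, sub_mul, mul_add, mul_sub, smul_mul_assoc, mul_smul_comm,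
        smul_add, smul_sub]
      module)
    (fun c D F => by
      simp only [sbFun, add_mul, sub_mul, mul_add, mul_sub, smul_mul_assoc, mul_smul_comm,
        smul_add, smul_sub]
      module)

/-- Shorthand for the super-commutator. -/
def sb (D F : E n) : E n := sbL n D F

/-- The ℤ₂-homogeneous component of `Λ(n)` of parity `p`. -/
def lpar (p : ZMod 2) : Submodule ℂ (Lambda n) where
  carrier := {f | ∀ S : Finset (Fin n), (S.card : ZMod 2) ≠ p → f S = 0}
  add_mem' := by intro f g hf hg S hS; simp [Pi.add_apply, hf S hS, hg S hS]
  zero_mem' := by intro S hS; rfl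
  smul_mem' := by intro c f hf S hS; simp [Pi.smul_apply, hf S hS]

/-- The ℤ-homogeneous component of `Λ(n)` of degree `m` (zero unless `0 ≤ m ≤ n`). -/
def ldeg (m : ℤ) : Submodule ℂ (Lambda n) where
  carrier := {f | ∀ S : Finset (Fin n), (S.card : ℤ) ≠ m → f S = 0}
  add_mem' := by intro f g hf hg S hS; simp [Pi.add_apply, hf S hS, hg S hS]
  zero_mem' := by intro S hS; rfl
  smul_mem' := by intro c f hf S hS; simp [Pi.smul_apply, hf S hS]

/-- Endomorphisms of `Λ(n)` that are ℤ₂-homogeneous of parity `p`. -/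
def epar (p : ZMod 2) : Submodule ℂ (E n) where
  carrier := {D | ∀ (q : ZMod 2), ∀ f ∈ lpar n q, D f ∈ lpar n (q + p)}
  add_mem' := by
    intro D F hD hF q f hf
    simpa [LinearMap.add_apply] using (lpar n (q + p)).add_mem (hD q f hf) (hF q f hf)
  zero_mem' := by intro q f hf; simpa using (lpar n (q + p)).zero_mem
  smul_mem' := by
    intro c D hD q f hf
    simpa [LinearMap.smul_apply] using (lpar n (q + p)).smul_mem c (hD q f hf)

/-- Endomorphisms of `Λ(n)` that are ℤ-homogeneous of degree `d`. -/
def edeg (d : ℤ) : Submodule ℂ (E n) where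
  carrier := {D | ∀ (m : ℤ), ∀ f ∈ ldeg n m, D f ∈ ldeg n (m + d)}
  add_mem' := by
    intro D F hD hF m f hf
    simpa [LinearMap.add_apply] using (ldeg n (m + d)).add_mem (hD m f hf) (hF m f hf)
  zero_mem' := by intro m f hf; simpa using (ldeg n (m + d)).zero_mem
  smul_mem' := by
    intro c D hD m f hf
    simpa [LinearMap.smul_apply] using (ldeg n (m + d)).smul_mem c (hD m f hf)

/-- The linear map `(f₁,…,f_n) ↦ ∑ᵢ fᵢ ∂ᵢ`. -/
def Wmap : (Fin n → Lambda n) →ₗ[ℂ] E n where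
  toFun F := ∑ i, mulOp n (F i) * pd n i
  map_add' := by
    intro F G
    simp only [Pi.add_apply, map_add, add_mul, Finset.sum_add_distrib]
  map_smul' := by
    intro c F
    simp only [RingHom.id_apply, Pi.smul_apply, map_smul, smul_mul_assoc, Finset.smul_sum]

/-- The divergence `(f₁,…,f_n) ↦ ∑ᵢ ∂ᵢ(fᵢ)`. -/
def divMap : (Fin n → Lambda n) →ₗ[ℂ] Lambda n where
  toFun F := ∑ i, pd n i (F i)
  map_add' := by
    intro F G
    simp only [Pi.add_apply, map_add, Finset.sum_add_distrib]
  map_smul' := by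
    intro c F
    simp only [RingHom.id_apply, Pi.smul_apply, map_smul, Finset.smul_sum]

/-- The Witt type Lie superalgebra `W(n) = {∑ fᵢ∂ᵢ : fᵢ ∈ Λ(n)}`. -/
def Wn : Submodule ℂ (E n) := LinearMap.range (Wmap n)

/-- Divergence-free coefficient tuples. -/
def divFree : Submodule ℂ (Fin n → Lambda n) := LinearMap.ker (divMap n)

/-- The special type Lie superalgebra `S(n) = {∑ fᵢ∂ᵢ : ∑ ∂ᵢ(fᵢ) = 0}`. -/
def Sn : Submodule ℂ (E n) := (divFree n).map (Wmap n)

/-- The top monomial `ω = x₁x₂⋯x_n`. -/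
def omegaTop : Lambda n := mono n Finset.univ

/-- `1 − x₁x₂⋯x_n`. -/
def oneM : Lambda n := mono n ∅ - omegaTop n

/-- Multiplication of every coefficient by `1 − x₁⋯x_n`. -/
def oneMScale : (Fin n → Lambda n) →ₗ[ℂ] (Fin n → Lambda n) :=
  LinearMap.pi fun i => (mulOp n (oneM n)) ∘ₗ LinearMap.proj i

/-- The Lie superalgebra `S̃(n) = {(1−x₁⋯x_n)∑ fᵢ∂ᵢ : ∑ ∂ᵢ(fᵢ) = 0}` (`n` even). -/
def Stn : Submodule ℂ (E n) := (divFree n).map (Wmap n ∘ₗ oneMScale n)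

/-- The conjugate index `i'`. -/
def cidx (i : Fin n) : Fin n :=
  ⟨if i.val < n / 2 then i.val + n / 2 else if i.val < 2 * (n / 2) then i.val - n / 2 else i.val,
   by have := i.isLt; split_ifs <;> omega⟩

/-- The linear map `f ↦ D_H(f) = (−1)^{|f|} ∑ᵢ ∂ᵢ(f)∂_{i'}` (the sign is implemented by the
parity operator `σ`, so that this is a single linear map agreeing with `D_H` on homogeneous
elements). -/
def DHmap : Lambda n →ₗ[ℂ] E n where
  toFun f := ∑ i, mulOp n (pd n i (par n f)) * pd n (cidx n i)
  map_add' := by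
    intro f g
    simp only [map_add, add_mul, Finset.sum_add_distrib]
  map_smul' := by
    intro c f
    simp only [RingHom.id_apply, map_smul, smul_mul_assoc, Finset.smul_sum]

/-- Evaluation of the top coefficient. -/
def evalTop : Lambda n →ₗ[ℂ] ℂ := LinearMap.proj Finset.univ

/-- The Hamiltonian Lie superalgebra `H(n) = {D_H(f) : f ∈ ⊕_{i=0}^{n−1} Λ(n)_i}`. -/
def Hn : Submodule ℂ (E n) := (LinearMap.ker (evalTop n)).map (DHmap n)

/-- `H̃(n) = {D_H(f) : f ∈ Λ(n)}`. -/
def HtN : Submodule ℂ (E n) := LinearMap.range (DHmap n)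

/-- The degree derivation `𝒞 = ∑ᵢ xᵢ∂ᵢ`. -/
def CC : E n := ∑ i, mulOp n (mono n {i}) * pd n i

/-- The span of the diagonal elements `xᵢ∂ᵢ`. -/
def diagSpan : Submodule ℂ (E n) :=
  Submodule.span ℂ (Set.range fun i : Fin n => mulOp n (mono n {i}) * pd n i)

/-- The four families of Cartan type Lie superalgebras. -/
inductive CT | W | S | St | H
deriving DecidableEq

/-- Validity of the parameter `n` for each family. -/
def CT.valid : CT → ℕ → Prop
  | .W, n => 4 ≤ n
  | .S, n => 4 ≤ n
  | .St, n => 4 ≤ n ∧ Even n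
  | .H, n => 4 < n

/-- The Cartan type Lie superalgebra `L` itself. -/
def CT.algebra : CT → (n : ℕ) → Submodule ℂ (E n)
  | .W, n => Wn n
  | .S, n => Sn n
  | .St, n => Stn n
  | .H, n => Hn n

/-- The extended algebra `L'`: `L' = L` for `W(n)` and `S̃(n)`, `L' = S(n) ⊕ ℂ𝒞` for `S(n)`,
and `L' = H̃(n) ⊕ ℂ𝒞` for `H(n)`. -/
def CT.prime : CT → (n : ℕ) → Submodule ℂ (E n)
  | .W, n => Wn n
  | .S, n => Sn n ⊔ Submodule.span ℂ {CC n}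
  | .St, n => Stn n
  | .H, n => HtN n ⊔ Submodule.span ℂ {CC n}

/-- The top degree `ξ_L` of the ℤ-grading. -/
def CT.xi : CT → (n : ℕ) → ℤ
  | .W, n => (n : ℤ) - 1
  | .S, n => (n : ℤ) - 2
  | .St, n => (n : ℤ) - 2
  | .H, n => (n : ℤ) - 3

/-- The ℤ-grading component `L_j = L ∩ W(n)_j`; for `S̃(n)` the component of degree `−1`
is `span{(1−x₁⋯x_n)∂ᵢ}` instead. -/
def CT.grade (t : CT) (n : ℕ) (j : ℤ) : Submodule ℂ (E n) :=
  match t with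
  | .St =>
      if j = -1 then
        Submodule.span ℂ (Set.range fun i : Fin n => mulOp n (oneM n) * pd n i)
      else Stn n ⊓ edeg n j
  | t => t.algebra n ⊓ edeg n j

/-- The ℤ-grading component `L'_j` of the extended algebra `L'`. -/
def CT.grade' (t : CT) (n : ℕ) (j : ℤ) : Submodule ℂ (E n) :=
  match t with
  | .St => CT.grade .St n j
  | t => t.prime n ⊓ edeg n j

/-- The standard Cartan subalgebra `H_L` of `L`: the part of the diagonal
`span{xᵢ∂ᵢ}` lying in `L`. -/
def CT.cartan (t : CT) (n : ℕ) : Submodule ℂ (E n) := t.algebra n ⊓ diagSpan n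

/-- The weight space of `M ⊆ End Λ(n)` of weight `μ ∈ H_L^*` under the adjoint action
of the standard Cartan subalgebra of `L`. -/
def wtsp (t : CT) (n : ℕ) (M : Submodule ℂ (E n)) (μ : Module.Dual ℂ (t.cartan n)) :
    Submodule ℂ (E n) where
  carrier := {x | x ∈ M ∧ ∀ h : t.cartan n, sbL n h x = μ h • x}
  add_mem' := by
    rintro x y ⟨hx, hx'⟩ ⟨hy, hy'⟩
    exact ⟨M.add_mem hx hy, fun h => by simp [map_add, hx' h, hy' h, smul_add]⟩
  zero_mem' := ⟨M.zero_mem, fun h => by simp⟩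
  smul_mem' := by
    rintro c x ⟨hx, hx'⟩
    exact ⟨M.smul_mem c hx, fun h => by simp [map_smul, hx' h, smul_comm c]⟩

/-- The set of roots of `M` with respect to the standard Cartan subalgebra of `L`:
the nonzero weights with nonzero weight space. -/
def CT.roots (t : CT) (n : ℕ) (M : Submodule ℂ (E n)) : Set (Module.Dual ℂ (t.cartan n)) :=
  {ε | ε ≠ 0 ∧ wtsp t n M ε ≠ ⊥}

/-- The sign `(−1)^p` for `p ∈ ℤ₂`. -/
def sgn (p : ZMod 2) : ℂ := (-1 : ℂ) ^ p.val

/-- `f` is a super-biderivation of `L` of ℤ₂-degree `pf`: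
a bilinear map with `f(L_α, L_β) ⊆ L_{α+β+pf}` satisfying
`f([x,y],z) = (−1)^{|x||f|}[x,f(y,z)] + (−1)^{|y||z|}[f(x,z),y]` and
`f(x,[y,z]) = [f(x,y),z] + (−1)^{(|f|+|x|)|y|}[y,f(x,z)]` for homogeneous `x,y,z ∈ L`.
(The bilinear map is given as a bilinear map on the ambient space `End Λ(n)`;
only its restriction to `L` is relevant.) -/
structure IsSuperBider (L : Submodule ℂ (E n)) (pf : ZMod 2)
    (f : E n →ₗ[ℂ] E n →ₗ[ℂ] E n) : Prop where
  maps : ∀ (α β : ZMod 2), ∀ x ∈ L ⊓ epar n α, ∀ y ∈ L ⊓ epar n β,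
    f x y ∈ L ⊓ epar n (α + β + pf)
  eq1 : ∀ (α β γ : ZMod 2), ∀ x ∈ L ⊓ epar n α, ∀ y ∈ L ⊓ epar n β, ∀ z ∈ L ⊓ epar n γ,
    f (sbL n x y) z = sgn (α * pf) • sbL n x (f y z) + sgn (β * γ) • sbL n (f x z) y
  eq2 : ∀ (α β γ : ZMod 2), ∀ x ∈ L ⊓ epar n α, ∀ y ∈ L ⊓ epar n β, ∀ z ∈ L ⊓ epar n γ,
    f x (sbL n y z) = sbL n (f x y) z + sgn ((pf + α) * β) • sbL n y (f x z)

/-- `D` is a superderivation of `L` of ℤ₂-degree `p`: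
`D(L_α) ⊆ L_{α+p}` and `D([x,y]) = [D(x),y] + (−1)^{|D||x|}[x,D(y)]` for homogeneous
`x, y ∈ L`. (Given as a linear map on the ambient space `End Λ(n)`.) -/
structure IsSuperDer (L : Submodule ℂ (E n)) (p : ZMod 2)
    (D : E n →ₗ[ℂ] E n) : Prop where
  maps : ∀ (α : ZMod 2), ∀ x ∈ L ⊓ epar n α, D x ∈ L ⊓ epar n (α + p)
  leib : ∀ (α β : ZMod 2), ∀ x ∈ L ⊓ epar n α, ∀ y ∈ L ⊓ epar n β,
    D (sbL n x y) = sbL n (D x) y + sgn (p * α) • sbL n x (D y)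

/-- `f ∈ BDer(L)_ε`: the super-biderivation `f` has weight `ε ∈ H_L^*`, i.e.
`f(L_η, L_ζ) ⊆ L_{ε+η+ζ}` for all weights `η, ζ`. -/
def CT.HasWeight (t : CT) (n : ℕ) (f : E n →ₗ[ℂ] E n →ₗ[ℂ] E n)
    (ε : Module.Dual ℂ (t.cartan n)) : Prop :=
  ∀ (η ζ : Module.Dual ℂ (t.cartan n)),
    ∀ x ∈ wtsp t n (t.algebra n) η, ∀ y ∈ wtsp t n (t.algebra n) ζ,
      f x y ∈ wtsp t n (t.algebra n) (ε + η + ζ)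

/-- `f ∈ BDer(L)_i`: the super-biderivation `f` has ℤ-degree `i`, i.e.
`f(L_j, L_k) ⊆ L_{i+j+k}` for all `j, k ∈ ℤ`. -/
def CT.HasDeg (t : CT) (n : ℕ) (f : E n →ₗ[ℂ] E n →ₗ[ℂ] E n) (i : ℤ) : Prop :=
  ∀ (j k : ℤ), ∀ x ∈ t.grade n j, ∀ y ∈ t.grade n k, f x y ∈ t.grade n (i + j + k)

section helpers

variable {n}

lemma pd_apply (i : Fin n) (g : Lambda n) (S : Finset (Fin n)) :
    pd n i g S = if i ∈ S then 0 else msign (S.filter (· < i)).card * g (insert i S) := rfl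

lemma par_apply (g : Lambda n) (S : Finset (Fin n)) : par n g S = msign S.card * g S := rfl

lemma mulOp_apply (a g : Lambda n) (U : Finset (Fin n)) :
    mulOp n a g U = ∑ S ∈ U.powerset, msign (inversions n S (U \ S)) * a S * g (U \ S) := rfl

lemma msign_mul_self (k : ℕ) : msign k * msign k = 1 := by
  unfold msign; rw [← mul_pow]; simp

lemma msign_ne (k : ℕ) : msign k ≠ 0 := by
  intro h; have := msign_mul_self k; rw [h] at this; simp at this

lemma msign_cases (k : ℕ) : msign k = 1 ∨ msign k = -1 := neg_one_pow_eq_or ℂ k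

lemma msign_add (a b : ℕ) : msign (a + b) = msign a * msign b := pow_add _ _ _

lemma par_par (g : Lambda n) : par n (par n g) = g := by
  funext S; rw [par_apply, par_apply, ← mul_assoc, msign_mul_self, one_mul]

lemma par_mul_par : par n * par n = 1 := LinearMap.ext par_par

lemma mulOp_one (g : Lambda n) : mulOp n (mono n ∅) g = g := by
  funext U
  rw [mulOp_apply, Finset.sum_eq_single ∅]
  · simp [mono, inversions, msign]
  · intro S _ hS; simp [mono, hS]
  · simp

lemma mulOp_right_one (a : Lambda n) : mulOp n a (mono n ∅) = a := by
  funext U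
  rw [mulOp_apply, Finset.sum_eq_single U]
  · simp [mono, inversions, msign]
  · intro S hS hne
    have : U \ S ≠ ∅ := by
      intro h
      exact hne (Finset.Subset.antisymm (Finset.mem_powerset.1 hS) (Finset.sdiff_eq_empty_iff_subset.1 h))
    simp [mono, this]
  · simp

lemma pd_mono_empty (i : Fin n) : pd n i (mono n ∅) = 0 := by
  funext S; simp [pd_apply, mono]

lemma pd_mono_notMem (i : Fin n) (T : Finset (Fin n)) (h : i ∉ T) : pd n i (mono n T) = 0 := by
  funext S
  rw [pd_apply]
  split_ifs with hi
  · rfl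
  · have : insert i S ≠ T := by rintro rfl; simp at h
    simp [mono, this]

lemma pd_mono_mem (i : Fin n) (T : Finset (Fin n)) (h : i ∈ T) :
    pd n i (mono n T) = msign ((T.erase i).filter (· < i)).card • mono n (T.erase i) := by
  funext S
  rw [pd_apply]
  split_ifs with hi
  · have : S ≠ T.erase i := by rintro rfl; simp at hi
    simp [mono, this]
  · by_cases hS : S = T.erase i
    · subst hS; simp [mono, Finset.insert_erase h]
    · have : insert i S ≠ T := by
        rintro rfl; exact hS (Finset.erase_insert hi).symm
      simp [mono, hS, this]

lemma pd_single (i k : Fin n) : pd n i (mono n {k}) = if i = k then mono n ∅ else 0 := by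
  split_ifs with h
  · subst h
    rw [pd_mono_mem _ _ (by simp)]; simp [msign]
  · exact pd_mono_notMem _ _ (by simpa using h)

lemma par_mono (T : Finset (Fin n)) : par n (mono n T) = msign T.card • mono n T := by
  funext S
  by_cases h : S = T
  · subst h; simp [par_apply]
  · simp [par_apply, mono, h]

lemma par_pd (i : Fin n) (g : Lambda n) : par n (pd n i g) = - pd n i (par n g) := by
  funext S
  simp only [par_apply, pd_apply, Pi.neg_apply]
  split_ifs with h
  · simp
  · rw [Finset.card_insert_of_notMem h, msign_add]; simp [msign]; ring

lemma par_mulOp (a g : Lambda n) : par n (mulOp n a g) = mulOp n (par n a) (par n g) := by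
  funext U
  simp only [par_apply, mulOp_apply, Finset.mul_sum]
  refine Finset.sum_congr rfl fun S hS => ?_
  have : U.card = S.card + (U \ S).card := by
    rw [add_comm, Finset.card_sdiff_add_card_eq_card (Finset.mem_powerset.1 hS)]
  rw [this, msign_add]; ring

/-- conjugation by parity of `a ∂_i` -/
lemma par_conj (a : Lambda n) (i : Fin n) :
    par n * (mulOp n a * pd n i) * par n = - (mulOp n (par n a) * pd n i) := by
  apply LinearMap.ext; intro g
  simp only [Module.End.mul_apply, LinearMap.neg_apply]
  rw [par_mulOp, par_pd, par_par, map_neg]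

/-- homogeneity of an operator -/
def Hom (X : E n) : Prop := par n * X * par n = X ∨ par n * X * par n = -X

lemma hom_of (a : Lambda n) (i : Fin n) (ha : par n a = a ∨ par n a = -a) :
    Hom (mulOp n a * pd n i) := by
  unfold Hom
  rw [par_conj]
  rcases ha with h | h
  · right; rw [h]
  · left; rw [h]; apply LinearMap.ext; intro g; simp

lemma hom_DH (a : Lambda n) (ha : par n a = a ∨ par n a = -a) : Hom (DHmap n a) := by
  have key : par n * DHmap n a * par n = DHmap n (par n a) := by
    show par n * (∑ i, mulOp n (pd n i (par n a)) * pd n (cidx n i)) * par n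
      = ∑ i, mulOp n (pd n i (par n (par n a))) * pd n (cidx n i)
    rw [Finset.mul_sum, Finset.sum_mul]
    refine Finset.sum_congr rfl fun i _ => ?_
    rw [par_conj, par_pd]; apply LinearMap.ext; intro g; simp
  unfold Hom; rw [key]
  rcases ha with h | h
  · left; rw [h]
  · right; rw [h, map_neg]

lemma par_mono_cases (T : Finset (Fin n)) :
    par n (mono n T) = mono n T ∨ par n (mono n T) = - mono n T := by
  rw [par_mono]
  rcases msign_cases T.card with h | h <;> rw [h] <;> simp

/-- Super-commuting condition -/
def Com (X Z : E n) : Prop := sbL n X Z = 0 ∨ sbL n Z X = 0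

lemma com_abs {A : Type*} [Ring A] [Algebra ℂ A] (p X Z : A) (hp : p * p = 1)
    (hX : p * X * p = X ∨ p * X * p = -X)
    (h : X * Z - (2:ℂ)⁻¹ • ((Z + p * Z * p) * X + (Z - p * Z * p) * (p * X * p)) = 0 ∨
      Z * X - (2:ℂ)⁻¹ • ((X + p * X * p) * Z + (X - p * X * p) * (p * Z * p)) = 0) :
    X * Z = Z * X ∨ X * Z = p * Z * p * X := by
  have half : ∀ B : A, (2:ℂ)⁻¹ • (B + B) = B := by
    intro B; rw [← two_smul ℂ B, smul_smul]; norm_num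
  rcases hX with hX | hX
  · left
    rcases h with h | h <;> rw [hX] at h
    · have : (Z + p * Z * p) * X + (Z - p * Z * p) * X = Z * X + Z * X := by
        noncomm_ring
      rw [this, half] at h; exact sub_eq_zero.1 h
    · have : (X + X) * Z + (X - X) * (p * Z * p) = X * Z + X * Z := by
        noncomm_ring
      rw [this, half] at h; exact (sub_eq_zero.1 h).symm
  · right
    rcases h with h | h <;> rw [hX] at h
    · have : (Z + p * Z * p) * X + (Z - p * Z * p) * -X
        = p * Z * p * X + p * Z * p * X := by
        noncomm_ring
      rw [this, half] at h; exact sub_eq_zero.1 h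
    · have : (X + -X) * Z + (X - -X) * (p * Z * p)
        = X * (p * Z * p) + X * (p * Z * p) := by
        noncomm_ring
      rw [this, half] at h
      have h' := sub_eq_zero.1 h
      have h2 : X * p = - (p * X) := by
        have := congrArg (fun B => p * B) hX
        simp only [← mul_assoc, hp, one_mul] at this
        rw [this]; simp
      calc X * Z = (X * (p * p)) * Z * (p * p) := by rw [hp, mul_one, mul_one]
        _ = (X * p) * (p * Z * p) * p := by simp only [mul_assoc]
        _ = - (p * (X * (p * Z * p)) * p) := by rw [h2]; noncomm_ring
        _ = - (p * (Z * X) * p) := by rw [h']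
        _ = - (p * Z * (X * p)) := by simp only [mul_assoc]
        _ = p * Z * p * X := by rw [h2]; noncomm_ring

lemma com_iff (X Z : E n) (hX : Hom X) (h : Com X Z) :
    X * Z = Z * X ∨ X * Z = par n * Z * par n * X :=
  com_abs (par n) X Z par_mul_par hX h

lemma com_left {X Z : E n} (hX : Hom X) (h : Com X Z) (v : Lambda n) (h0 : X (Z v) = 0)
    (s : ℂ) (hs : s ≠ 0) (hv : par n (X v) = s • X v) : Z (X v) = 0 := by
  rcases com_iff X Z hX h with h | h
  · have := congrArg (fun A => A v) h
    simp only [Module.End.mul_apply] at this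
    rw [← this, h0]
  · have := congrArg (fun A => A v) h
    simp only [Module.End.mul_apply] at this
    rw [hv, h0, map_smul, map_smul] at this
    have h1 := congrArg (par n) this
    rw [map_smul, par_par, map_zero] at h1
    exact (smul_eq_zero.1 h1.symm).resolve_left hs

lemma com_right {X Z : E n} (hX : Hom X) (h : Com X Z) (v : Lambda n) (h0 : Z (X v) = 0)
    (s : ℂ) (hv : par n (X v) = s • X v) : X (Z v) = 0 := by
  rcases com_iff X Z hX h with h | h
  · have := congrArg (fun A => A v) h
    simp only [Module.End.mul_apply] at this
    rw [this, h0]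
  · have := congrArg (fun A => A v) h
    simp only [Module.End.mul_apply] at this
    rw [hv, map_smul, h0] at this
    simpa using this

lemma Wmap_apply (F : Fin n → Lambda n) (v : Lambda n) :
    Wmap n F v = ∑ i, mulOp n (F i) (pd n i v) := by
  show (∑ i, mulOp n (F i) * pd n i) v = _
  rw [LinearMap.sum_apply]; rfl

lemma Wmap_one (F : Fin n → Lambda n) : Wmap n F (mono n ∅) = 0 := by
  rw [Wmap_apply]; simp [pd_mono_empty]

lemma Wmap_x (F : Fin n → Lambda n) (k : Fin n) : Wmap n F (mono n {k}) = F k := by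
  rw [Wmap_apply, Finset.sum_eq_single k]
  · rw [pd_single, if_pos rfl, mulOp_right_one]
  · intro i _ hi; rw [pd_single, if_neg hi, map_zero]
  · simp

lemma mem_Wn (a : Lambda n) (i : Fin n) : mulOp n a * pd n i ∈ Wn n := by
  refine ⟨Pi.single i a, ?_⟩
  show ∑ k, mulOp n ((Pi.single i a : Fin n → Lambda n) k) * pd n k = _
  rw [Finset.sum_eq_single i]
  · simp
  · intro k _ hk; simp [Pi.single_eq_of_ne hk]
  · simp

lemma Wmap_single (a : Lambda n) (i : Fin n) :
    Wmap n (Pi.single i a) = mulOp n a * pd n i := by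
  show ∑ k, mulOp n ((Pi.single i a : Fin n → Lambda n) k) * pd n k = _
  rw [Finset.sum_eq_single i]
  · simp
  · intro k _ hk; simp [Pi.single_eq_of_ne hk]
  · simp

lemma single_divFree (a : Lambda n) (i : Fin n) (h : pd n i a = 0) :
    (Pi.single i a : Fin n → Lambda n) ∈ divFree n := by
  show ∑ k, pd n k ((Pi.single i a : Fin n → Lambda n) k) = 0
  rw [Finset.sum_eq_single i]
  · simpa using h
  · intro k _ hk; simp [Pi.single_eq_of_ne hk]
  · simp

lemma CC_mem : CC n ∈ Wn n := Submodule.sum_mem _ fun i _ => mem_Wn _ i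

lemma prime_le (t : CT) : t.prime n ≤ Wn n := by
  have hC : Submodule.span ℂ {CC n} ≤ Wn n := by
    rw [Submodule.span_le]; rintro _ rfl; exact CC_mem
  cases t
  · exact le_refl _
  · refine sup_le ?_ hC
    rintro _ ⟨F, -, rfl⟩; exact ⟨F, rfl⟩
  · rintro _ ⟨F, -, rfl⟩; exact ⟨_, rfl⟩
  · refine sup_le ?_ hC
    rintro _ ⟨a, rfl⟩
    show (∑ i, mulOp n (pd n i (par n a)) * pd n (cidx n i)) ∈ _
    exact Submodule.sum_mem _ fun i _ => mem_Wn _ _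

/-- constant coefficient tuples -/
lemma const_of_pd (a : Lambda n) (h : ∀ i, pd n i a = 0) : a = a ∅ • mono n ∅ := by
  funext S
  by_cases hS : S = ∅
  · subst hS; simp [mono]
  · obtain ⟨i, hi⟩ := Finset.nonempty_iff_ne_empty.2 hS
    have := congrFun (h i) (S.erase i)
    rw [pd_apply, if_neg (by simp), Finset.insert_erase hi] at this
    have := (mul_eq_zero.1 this).resolve_left (msign_ne _)
    simp [mono, hS, this]

lemma coef_zero (F : Fin n → Lambda n) (h : ∀ i k, pd n i (F k) = 0) (T : Finset (Fin n))
    (hT : Wmap n F (mono n T) = 0) (i : Fin n) (hi : i ∈ T) : F i = 0 := by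
  rw [Wmap_apply] at hT
  have h1 := congrFun hT (T.erase i)
  rw [Finset.sum_apply, Finset.sum_eq_single i] at h1
  · rw [const_of_pd (F i) (fun j => h j i), map_smul, LinearMap.smul_apply, mulOp_one,
      pd_mono_mem i T hi] at h1
    have : F i ∅ = 0 := by
      simpa [mono, msign_ne] using h1
    rw [const_of_pd (F i) (fun j => h j i), this, zero_smul]
  · intro k _ hk
    rw [const_of_pd (F k) (fun j => h j k), map_smul, LinearMap.smul_apply, mulOp_one]
    by_cases hkT : k ∈ T
    · rw [pd_mono_mem k T hkT]
      have : T.erase i ≠ T.erase k := by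
        intro e
        have : k ∈ T.erase i := Finset.mem_erase.2 ⟨hk, hkT⟩
        rw [e] at this; simp at this
      simp [mono, this]
    · rw [pd_mono_notMem k T hkT]; simp
  · simp

/-- From commuting with all `∂_i`: coefficients are constant. -/
lemma const_of_com (F : Fin n → Lambda n) (h : ∀ i, Com (pd n i) (Wmap n F)) (i k : Fin n) :
    pd n i (F k) = 0 := by
  have hX : Hom (pd n i) := by
    have := hom_of (mono n ∅) i (par_mono_cases ∅)
    rwa [show mulOp n (mono n ∅) = 1 from LinearMap.ext mulOp_one, one_mul] at this
  rw [← Wmap_x F k]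
  by_cases hik : i = k
  · refine com_right hX (h i) _ ?_ 1 ?_
    · rw [pd_single, if_pos hik, Wmap_one]
    · rw [pd_single, if_pos hik, par_mono]; simp [msign]
  · refine com_right hX (h i) _ ?_ 1 ?_
    · rw [pd_single, if_neg hik, map_zero]
    · rw [pd_single, if_neg hik]; simp

lemma mono_ldeg (T : Finset (Fin n)) : mono n T ∈ ldeg n T.card := by
  intro S hS
  have : S ≠ T := by rintro rfl; exact hS rfl
  simp [mono, this]

lemma pd_ldeg (i : Fin n) (m : ℤ) (a : Lambda n) (ha : a ∈ ldeg n m) :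
    pd n i a ∈ ldeg n (m - 1) := by
  intro S hS
  rw [pd_apply]
  split_ifs with h
  · rfl
  · rw [ha, mul_zero]
    rw [Finset.card_insert_of_notMem h]; push_cast; intro e; apply hS; omega

lemma par_ldeg (m : ℤ) (a : Lambda n) (ha : a ∈ ldeg n m) : par n a ∈ ldeg n m := by
  intro S hS; rw [par_apply, ha S hS, mul_zero]

lemma mulOp_ldeg (m p : ℤ) (a b : Lambda n) (ha : a ∈ ldeg n m) (hb : b ∈ ldeg n p) :
    mulOp n a b ∈ ldeg n (m + p) := by
  intro U hU
  rw [mulOp_apply]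
  refine Finset.sum_eq_zero fun S hS => ?_
  by_cases h : (S.card : ℤ) = m
  · rw [hb, mul_zero]
    intro h'
    have := Finset.card_sdiff_add_card_eq_card (Finset.mem_powerset.1 hS)
    apply hU; omega
  · rw [ha S h]; simp

lemma op_edeg (m : ℤ) (a : Lambda n) (ha : a ∈ ldeg n m) (i : Fin n) :
    mulOp n a * pd n i ∈ edeg n (m - 1) := by
  intro p g hg
  have := mulOp_ldeg m (p - 1) a _ ha (pd_ldeg i p g hg)
  rwa [show m + (p - 1) = p + (m - 1) by ring] at this

lemma pd_eq (i : Fin n) : mulOp n (mono n ∅) * pd n i = pd n i := by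
  rw [show mulOp n (mono n ∅) = 1 from LinearMap.ext mulOp_one, one_mul]

lemma pd_edeg (i : Fin n) : pd n i ∈ edeg n (-1) := by
  have := op_edeg 0 (mono n ∅) (by simpa using mono_ldeg (n := n) ∅) i
  rw [pd_eq] at this; simpa using this

lemma cidx_cidx (i : Fin n) : cidx n (cidx n i) = i := by
  ext
  simp only [cidx]
  have := i.isLt
  split_ifs <;> omega

lemma DH_apply_x (a : Lambda n) (k : Fin n) :
    DHmap n a (mono n {cidx n k}) = pd n k (par n a) := by
  show (∑ i, mulOp n (pd n i (par n a)) * pd n (cidx n i)) _ = _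
  rw [LinearMap.sum_apply, Finset.sum_eq_single k]
  · rw [Module.End.mul_apply, pd_single, if_pos rfl, mulOp_right_one]
  · intro i _ hi
    have : cidx n i ≠ cidx n k := by
      intro e; apply hi; rw [← cidx_cidx i, e, cidx_cidx]
    rw [Module.End.mul_apply, pd_single, if_neg this, map_zero]
  · simp

lemma DH_one (a : Lambda n) : DHmap n a (mono n ∅) = 0 := by
  show (∑ i, mulOp n (pd n i (par n a)) * pd n (cidx n i)) _ = _
  rw [LinearMap.sum_apply]
  exact Finset.sum_eq_zero fun i _ => by rw [Module.End.mul_apply, pd_mono_empty, map_zero]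

lemma DH_edeg (m : ℤ) (a : Lambda n) (ha : a ∈ ldeg n m) : DHmap n a ∈ edeg n (m - 2) := by
  show (∑ i, mulOp n (pd n i (par n a)) * pd n (cidx n i)) ∈ _
  refine Submodule.sum_mem _ fun i _ => ?_
  have := op_edeg (m - 1) _ (pd_ldeg i m _ (par_ldeg m a ha)) (cidx n i)
  rwa [show m - 1 - 1 = m - 2 by ring] at this

lemma DH_lin (i : Fin n) : DHmap n (- mono n {cidx n i}) = pd n i := by
  show ∑ k, mulOp n (pd n k (par n (- mono n {cidx n i}))) * pd n (cidx n k) = _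
  rw [map_neg, par_mono]
  rw [Finset.sum_eq_single (cidx n i)]
  · simp [msign, pd_single, cidx_cidx, pd_eq]
  · intro k _ hk
    simp [msign, pd_single, hk]
  · simp

/-- The key statement for one `Z`. -/
def Goal (t : CT) (n : ℕ) : Prop := ∀ Z ∈ t.prime n,
  (∀ X ∈ t.algebra n, X ∈ t.grade n (-1) ⊔ t.grade n (t.xi n) → Com X Z) → Z = 0

lemma card_erase_int (T : Finset (Fin n)) (j : Fin n) (h : j ∈ T) :
    ((T.erase j).card : ℤ) = T.card - 1 := by
  have := Finset.card_erase_add_one h; omega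

lemma goal_W : Goal .W n := by
  intro Z hZ h
  obtain ⟨F, rfl⟩ := hZ
  have hm : ∀ i, pd n i ∈ Wn n := fun i => by rw [← pd_eq]; exact mem_Wn _ i
  have hc := const_of_com F fun i => h _ (hm i) (Submodule.mem_sup_left ⟨hm i, pd_edeg i⟩)
  have : F = 0 := by
    funext i
    refine coef_zero F hc Finset.univ ?_ i (Finset.mem_univ i)
    have hx : (mulOp n (mono n Finset.univ) * pd n i) (mono n {i}) = mono n Finset.univ := by
      rw [Module.End.mul_apply, pd_single, if_pos rfl, mulOp_right_one]
    rw [← hx]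
    refine com_left (X := mulOp n (mono n Finset.univ) * pd n i)
      (hom_of _ _ (par_mono_cases _)) (h _ (mem_Wn _ _) (Submodule.mem_sup_right
      ⟨mem_Wn _ _, ?_⟩)) _ ?_ (msign (Finset.univ : Finset (Fin n)).card) (msign_ne _) ?_
    · have := op_edeg _ _ (mono_ldeg (n := n) Finset.univ) i
      simpa [CT.xi] using this
    · rw [Wmap_x, Module.End.mul_apply, hc, map_zero]
    · rw [hx, par_mono]
  rw [this, map_zero]

lemma goal_S (hn : 4 ≤ n) : Goal .S n := by
  intro Z hZ h
  obtain ⟨F, rfl⟩ := prime_le _ hZ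
  have hS : ∀ (a : Lambda n) i, pd n i a = 0 → mulOp n a * pd n i ∈ Sn n := fun a i ha =>
    ⟨_, single_divFree a i ha, Wmap_single a i⟩
  have hm : ∀ i, pd n i ∈ Sn n := fun i => by rw [← pd_eq]; exact hS _ i (pd_mono_empty i)
  have hc := const_of_com F fun i => h _ (hm i) (Submodule.mem_sup_left ⟨hm i, pd_edeg i⟩)
  have : F = 0 := by
    funext i
    have : Nontrivial (Fin n) := Fin.nontrivial_iff_two_le.2 (by omega)
    obtain ⟨j, hj⟩ := exists_ne i
    refine coef_zero F hc (Finset.univ.erase j) ?_ i (by simp [hj.symm])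
    have hx : (mulOp n (mono n (Finset.univ.erase j)) * pd n j) (mono n {j})
        = mono n (Finset.univ.erase j) := by
      rw [Module.End.mul_apply, pd_single, if_pos rfl, mulOp_right_one]
    have hmem := hS (mono n (Finset.univ.erase j)) j (pd_mono_notMem _ _ (by simp))
    rw [← hx]
    refine com_left (X := mulOp n (mono n (Finset.univ.erase j)) * pd n j)
      (hom_of _ _ (par_mono_cases _)) (h _ hmem (Submodule.mem_sup_right
      ⟨hmem, ?_⟩)) _ ?_ (msign (Finset.univ.erase j).card) (msign_ne _) ?_
    · have := op_edeg _ _ (mono_ldeg (n := n) (Finset.univ.erase j)) j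
      rw [card_erase_int _ _ (Finset.mem_univ j), Finset.card_univ, Fintype.card_fin] at this
      show _ ∈ edeg n ((n : ℤ) - 2)
      rwa [show (n : ℤ) - 2 = n - 1 - 1 by ring]
    · rw [Wmap_x, Module.End.mul_apply, hc, map_zero]
    · rw [hx, par_mono]
  rw [this, map_zero]

lemma goal_H (hn : 4 < n) : Goal .H n := by
  intro Z hZ h
  obtain ⟨F, rfl⟩ := prime_le _ hZ
  have hH : ∀ T : Finset (Fin n), T ≠ Finset.univ → DHmap n (mono n T) ∈ Hn n := fun T hT =>
    ⟨_, by show mono n T Finset.univ = 0; simp [mono, hT.symm], rfl⟩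
  have hm : ∀ i, pd n i ∈ Hn n := fun i => by
    rw [← DH_lin, map_neg]
    refine Submodule.neg_mem _ (hH _ ?_)
    intro e
    have := congrArg Finset.card e
    simp at this; omega
  have hc := const_of_com F fun i => h _ (hm i) (Submodule.mem_sup_left ⟨hm i, pd_edeg i⟩)
  have : F = 0 := by
    funext i
    have : Nontrivial (Fin n) := Fin.nontrivial_iff_two_le.2 (by omega)
    obtain ⟨j, hj⟩ := exists_ne i
    obtain ⟨k, hk⟩ : ∃ k : Fin n, k ∉ ({i, j} : Finset (Fin n)) := by
      by_contra! hcon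
      have h1 : (Finset.univ : Finset (Fin n)) ⊆ {i, j} := fun k _ => hcon k
      have := (Finset.card_le_card h1).trans Finset.card_le_two
      simp at this; omega
    simp only [Finset.mem_insert, Finset.mem_singleton, not_or] at hk
    refine coef_zero F hc ((Finset.univ.erase j).erase k) ?_ i (by simp [hj.symm, Ne.symm hk.1])
    obtain ⟨s, hs, hx⟩ : ∃ s : ℂ, s ≠ 0 ∧ DHmap n (mono n (Finset.univ.erase j))
        (mono n {cidx n k}) = s • mono n ((Finset.univ.erase j).erase k) := by
      refine ⟨msign (Finset.univ.erase j).card *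
        msign (((Finset.univ.erase j).erase k).filter (· < k)).card,
        mul_ne_zero (msign_ne _) (msign_ne _), ?_⟩
      rw [DH_apply_x, par_mono, map_smul, pd_mono_mem _ _ (by simp [hk.2]), smul_smul]
    have hmem := hH (Finset.univ.erase j) (by
      intro e; have : j ∈ Finset.univ.erase j := by rw [e]; simp
      simp at this)
    have : Wmap n F (DHmap n (mono n (Finset.univ.erase j)) (mono n {cidx n k})) = 0 := by
      refine com_left (hom_DH _ (par_mono_cases _)) (h _ hmem (Submodule.mem_sup_right
        ⟨hmem, ?_⟩)) _ ?_ (msign ((Finset.univ.erase j).erase k).card) (msign_ne _) ?_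
      · have := DH_edeg _ _ (mono_ldeg (n := n) (Finset.univ.erase j))
        rw [card_erase_int _ _ (Finset.mem_univ j), Finset.card_univ, Fintype.card_fin] at this
        show _ ∈ edeg n ((n : ℤ) - 3)
        rwa [show (n : ℤ) - 3 = n - 1 - 2 by ring]
      · rw [Wmap_x, const_of_pd (F (cidx n k)) (fun i => hc i _), map_smul, DH_one, smul_zero]
      · rw [hx, map_smul, par_mono, smul_comm]
    rw [hx, map_smul] at this
    exact (smul_eq_zero.1 this).resolve_left hs
  rw [this, map_zero]

/-- `mulOp (1-ω)` on coordinates. -/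
lemma oneM_apply (a : Lambda n) : mulOp n (oneM n) a = a - a ∅ • omegaTop n := by
  have : mulOp n (omegaTop n) a = a ∅ • omegaTop n := by
    funext U
    rw [mulOp_apply]
    by_cases hU : U = Finset.univ
    · subst hU
      rw [Finset.sum_eq_single Finset.univ]
      · simp [omegaTop, mono, inversions, msign]
      · intro S _ hS; simp [omegaTop, mono, hS]
      · simp
    · rw [Finset.sum_eq_zero]
      · simp [omegaTop, mono, hU]
      · intro S hS
        have : S ≠ Finset.univ := by
          rintro rfl
          exact hU (Finset.univ_subset_iff.1 (Finset.mem_powerset.1 hS))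
        simp [omegaTop, mono, this]
  rw [oneM, map_sub, LinearMap.sub_apply, mulOp_one, this]

lemma oneM_inj (hn : 4 ≤ n) (a : Lambda n) (h : mulOp n (oneM n) a = 0) : a = 0 := by
  rw [oneM_apply] at h
  have h0 := congrFun h ∅
  have : Nonempty (Fin n) := ⟨⟨0, by omega⟩⟩
  have hne : (∅ : Finset (Fin n)) ≠ Finset.univ := Finset.univ_nonempty.ne_empty.symm
  have : a ∅ = 0 := by simpa [omegaTop, mono, hne] using h0
  simpa [this] using h

lemma Wmap_omega_empty (hn : 4 ≤ n) (F : Fin n → Lambda n) :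
    Wmap n F (omegaTop n) ∅ = 0 := by
  rw [Wmap_apply, Finset.sum_apply]
  refine Finset.sum_eq_zero fun i _ => ?_
  have : ({i} : Finset (Fin n)) ≠ Finset.univ := by
    intro e
    have := congrArg Finset.card e
    simp at this; omega
  simp [mulOp_apply, pd_apply, omegaTop, mono, this]

lemma goal_St (hn : 4 ≤ n) (he : Even n) : Goal .St n := by
  intro Z hZ h
  obtain ⟨F, rfl⟩ := prime_le _ hZ
  have hpar : par n (oneM n) = oneM n := by
    rw [oneM, map_sub, omegaTop, par_mono, par_mono]
    simp [msign, he.neg_one_pow]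
  have hm : ∀ i, mulOp n (oneM n) * pd n i ∈ Stn n := fun i => by
    refine ⟨_, single_divFree (mono n ∅) i (pd_mono_empty i), ?_⟩
    rw [LinearMap.comp_apply, ← Wmap_single]
    congr 1
    funext k
    show mulOp n (oneM n) ((Pi.single i (mono n ∅) : Fin n → Lambda n) k) = _
    by_cases hk : k = i
    · subst hk; simp [mulOp_right_one]
    · simp [Pi.single_eq_of_ne hk]
  have hcom : ∀ i, Com (mulOp n (oneM n) * pd n i) (Wmap n F) := fun i => by
    refine h _ (hm i) (Submodule.mem_sup_left ?_)
    have : CT.grade .St n (-1) =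
        Submodule.span ℂ (Set.range fun i : Fin n => mulOp n (oneM n) * pd n i) := by
      simp [CT.grade]
    rw [this]
    exact Submodule.subset_span ⟨i, rfl⟩
  have hhom : ∀ i, Hom (mulOp n (oneM n) * pd n i) := fun i => hom_of _ _ (Or.inl hpar)
  have hx : ∀ i, (mulOp n (oneM n) * pd n i) (mono n {i}) = oneM n := fun i => by
    rw [Module.End.mul_apply, pd_single, if_pos rfl, mulOp_right_one]
  have hW1 : Wmap n F (oneM n) = - Wmap n F (omegaTop n) := by
    rw [oneM, map_sub, Wmap_one, zero_sub]
  have hoff : ∀ i k, i ≠ k → pd n i (F k) = 0 := by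
    intro i k hik
    apply oneM_inj hn
    have hz : (mulOp n (oneM n) * pd n i) (mono n {k}) = 0 := by
      rw [Module.End.mul_apply, pd_single, if_neg hik, map_zero]
    have := com_right (hhom i) (hcom i) (mono n {k}) (by rw [hz, map_zero]) 1 (by rw [hz]; simp)
    rwa [Wmap_x] at this
  have hdiag0 : ∀ i, pd n i (F i) ∅ = 0 := by
    intro i
    have key : (mulOp n (oneM n) (pd n i (F i))) ∅ = 0 := by
      have hz := Wmap_omega_empty hn F
      rcases com_iff _ _ (hhom i) (hcom i) with e | e
      · have := congrFun (congrArg (fun A => A (mono n {i})) e) ∅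
        simp only [Module.End.mul_apply] at this hx
        rw [Wmap_x, hx, hW1] at this
        rw [this]; simp [hz]
      · have := congrFun (congrArg (fun A => A (mono n {i})) e) ∅
        simp only [Module.End.mul_apply] at this hx
        rw [Wmap_x, hx, hpar, hW1] at this
        rw [this]; simp [par_apply, hz]
    rw [oneM_apply] at key
    have : Nonempty (Fin n) := ⟨⟨0, by omega⟩⟩
    have hne : (∅ : Finset (Fin n)) ≠ Finset.univ := Finset.univ_nonempty.ne_empty.symm
    simpa [omegaTop, mono, hne] using key
  have hc : ∀ i k, pd n i (F k) = 0 := by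
    intro i k
    by_cases hik : i = k
    · subst hik
      have : pd n i (F i) = (pd n i (F i)) ∅ • mono n ∅ := by
        apply const_of_pd
        intro j
        funext S
        by_cases hj : j ∈ S
        · simp [pd_apply, hj]
        · by_cases hji : j = i
          · simp [pd_apply, hji]
          · -- use that `∂_j F_i = 0`
            by_cases hiS : i ∈ S
            · simp [pd_apply, hiS]
            · have h1 := congrFun (hoff j i hji) (insert i S)
              rw [pd_apply, if_neg (by simp [hj, hji])] at h1
              have h2 := (mul_eq_zero.1 h1).resolve_left (msign_ne _)
              rw [Finset.insert_comm] at h2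
              simp [pd_apply, h2]
      rw [this, hdiag0, zero_smul]
    · exact hoff i k hik
  have : F = 0 := by
    funext i
    refine coef_zero F hc Finset.univ ?_ i (Finset.mem_univ i)
    have := com_left (hhom i) (hcom i) (mono n {i})
      (by rw [Wmap_x, Module.End.mul_apply, hc, map_zero]) 1 one_ne_zero (by rw [hx, hpar]; simp)
    rw [hx, hW1] at this
    exact neg_eq_zero.1 this
  rw [this, map_zero]

lemma goal_all (t : CT) (ht : t.valid n) : Goal t n := by
  cases t
  · exact goal_W
  · exact goal_S ht
  · exact goal_St ht.1 ht.2
  · exact goal_H ht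

end helpers

/-- Let `f` be a homogeneous super-biderivation of a Cartan type Lie
superalgebra `L` with representing maps `φ_f, ψ_f : L → L'`
(`f(x,y) = [φ_f(x), y] = [x, ψ_f(y)]`). If `φ_f` or `ψ_f` vanishes on
`L_{−1} ⊕ L_{ξ_L}`, then `f` is the zero map. -/
theorem superBider_vanish_ends (n : ℕ) (t : CT) (ht : t.valid n)
    (pf : ZMod 2) (f : E n →ₗ[ℂ] E n →ₗ[ℂ] E n)
    (hf : IsSuperBider n (t.algebra n) pf f)
    (phi psi : E n →ₗ[ℂ] E n)
    (hmaps : ∀ x ∈ t.algebra n, phi x ∈ t.prime n ∧ psi x ∈ t.prime n)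
    (hrepr : ∀ x ∈ t.algebra n, ∀ y ∈ t.algebra n,
      f x y = sbL n (phi x) y ∧ f x y = sbL n x (psi y))
    (hvan : (∀ x ∈ t.grade n (-1) ⊔ t.grade n (t.xi n), phi x = 0) ∨
            (∀ x ∈ t.grade n (-1) ⊔ t.grade n (t.xi n), psi x = 0)) :
    ∀ x ∈ t.algebra n, ∀ y ∈ t.algebra n, f x y = 0 := by
  have hG := goal_all t ht
  rcases hvan with hv | hv
  · intro x hx y hy
    have : psi y = 0 := by
      refine hG _ (hmaps y hy).2 fun X hX hX' => Or.inl ?_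
      rw [← (hrepr X hX y hy).2, (hrepr X hX y hy).1, hv X hX', map_zero, LinearMap.zero_apply]
    rw [(hrepr x hx y hy).2, this, map_zero]
  · intro x hx y hy
    have : phi x = 0 := by
      refine hG _ (hmaps x hx).1 fun X hX hX' => Or.inr ?_
      rw [← (hrepr x hx X hX).1, (hrepr x hx X hX).2, hv X hX', map_zero]
    rw [(hrepr x hx y hy).1, this, map_zero, LinearMap.zero_apply]

end CartanSuper
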